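/- Uniform coercivity in the parabolic case: for every compact set K ⊂ X there exist constants A > 0 and B, C ≥ 0, independent of x and T, such that for all x ∈ K, all T ∈ (1, +∞], and all φ ∈ D_0^{1,2}(1, T), one has A_{x,[1,T]}(φ) ≥ A ‖φ‖_{D_T}² − B ‖φ‖_{D_T} − C. -/

import Mathlib

open MeasureTheory Real Set Filter Topology
open scoped RealInnerProductSpace ENNReal

noncomputable section
namespace NBodyHJ

attribute [local instance] Classical.propDecidable

abbrev Conf (d N : ℕ) := Fin N → EuclideanSpace ℝ (Fin d)

variable {d N : ℕ}

/-- The mass inner product on the configuration space. -/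
def minner (m : Fin N → ℝ) (x y : Conf d N) : ℝ := ∑ i, m i * ⟪x i, y i⟫

/-- The mass norm on the configuration space. -/
def mnorm (m : Fin N → ℝ) (x : Conf d N) : ℝ := Real.sqrt (minner m x x)

/-- Membership in the zero-barycenter configuration space `X`. -/
def inX (m : Fin N → ℝ) (x : Conf d N) : Prop := ∑ i, m i • x i = 0

/-- Collision configurations. -/
def collision (x : Conf d N) : Prop := ∃ i j, i ≠ j ∧ x i = x j

/-- Membership in the collision-free zero-barycenter space `Ω`. -/
def inOmega (m : Fin N → ℝ) (x : Conf d N) : Prop := inX m x ∧ ¬ collision x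

/-- The Newtonian potential (with junk value `0` for a colliding pair). -/
def U (m : Fin N → ℝ) (x : Conf d N) : ℝ :=
  ∑ i : Fin N, ∑ j : Fin N, if i < j then m i * m j / ‖x i - x j‖ else 0

/-- The time interval `(t₀, T)`, where `T ∈ (t₀, +∞]` is extended-real. -/
def timeSet (t0 : ℝ) (T : EReal) : Set ℝ := {t : ℝ | t0 < t ∧ (t : EReal) < T}

/-- Membership of the pair (curve, derivative) `(φ, φ')` in `D₀^{1,2}(t₀, T)`:
`φ` starts at `0`, takes values in `X`, is the integral of `φ'` (hence locally
absolutely continuous), and `φ'` has finite `L²` mass norm on `(t₀, T)`. -/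
def InD (m : Fin N → ℝ) (t0 : ℝ) (T : EReal) (φ φ' : ℝ → Conf d N) : Prop :=
  φ t0 = 0 ∧
  (∀ t : ℝ, t0 ≤ t → (t : EReal) < T → inX m (φ t)) ∧
  (∀ t : ℝ, t0 ≤ t → (t : EReal) < T → φ t = ∫ s in Set.Ioc t0 t, φ' s) ∧
  (∀ t : ℝ, t0 ≤ t → (t : EReal) < T → IntegrableOn φ' (Set.Ioc t0 t)) ∧
  IntegrableOn (fun t => (mnorm m (φ' t)) ^ 2) (timeSet t0 T)

/-- The norm `‖φ‖_{D_T}`. -/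
def Dnorm (m : Fin N → ℝ) (t0 : ℝ) (T : EReal) (φ' : ℝ → Conf d N) : ℝ :=
  Real.sqrt (∫ t in timeSet t0 T, (mnorm m (φ' t)) ^ 2)

/-- The motion `γ(t) = φ(t) + t a + x - a` associated with `φ` in the hyperbolic case. -/
def hypCurve (a x : Conf d N) (φ : ℝ → Conf d N) (t : ℝ) : Conf d N :=
  φ t + t • a + x - a

/-- The integrand of the hyperbolic renormalized Lagrangian action. -/
def hypIntegrand (m : Fin N → ℝ) (a x : Conf d N) (φ φ' : ℝ → Conf d N) (t : ℝ) : ℝ :=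
  (mnorm m (φ' t)) ^ 2 / 2 + U m (hypCurve a x φ t) - U m (t • a)

/-- The hyperbolic renormalized Lagrangian action `A_{x,[1,T]}(φ)`, with values in
`ℝ ∪ {+∞}` : it equals the integral of the renormalized Lagrangian if this integrand is
integrable and the motion is a.e. collision-free, and `+∞` otherwise. -/
def hypAction (m : Fin N → ℝ) (a x : Conf d N) (T : EReal) (φ φ' : ℝ → Conf d N) : EReal :=
  if IntegrableOn (hypIntegrand m a x φ φ') (timeSet 1 T) ∧
      (∀ᵐ t ∂volume.restrict (timeSet 1 T), ¬ collision (hypCurve a x φ t))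
  then ((∫ t in timeSet 1 T, hypIntegrand m a x φ φ' t : ℝ) : EReal)
  else (⊤ : EReal)

/-- The infimum of the hyperbolic renormalized action over `D₀^{1,2}(1,T)`. -/
def hypInf (m : Fin N → ℝ) (a x : Conf d N) (T : EReal) : EReal :=
  ⨅ (φ : ℝ → Conf d N) (φ' : ℝ → Conf d N) (_ : InD m 1 T φ φ'), hypAction m a x T φ φ'

/-- The renormalized value function `v(x)` in the hyperbolic case. -/
def hypValue (m : Fin N → ℝ) (a x : Conf d N) : ℝ :=
  (hypInf m a x ⊤).toReal - minner m a x


/-- `bm` is a normalized minimal central configuration : it lies in `X`, is collision-free,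
has unit mass norm, and minimizes the Newtonian potential over the inertia ellipsoid
`E = {x ∈ X : ⟨x,x⟩_M = 1}` (whence it is a critical point of `U` restricted to `E`). -/
def IsMinCentral (m : Fin N → ℝ) (bm : Conf d N) : Prop :=
  inX m bm ∧ ¬ collision bm ∧ minner m bm bm = 1 ∧
    ∀ y : Conf d N, inX m y → ¬ collision y → minner m y y = 1 → U m bm ≤ U m y

/-- `β = (9 U(b_m)/2)^{1/3}`. -/
def beta (m : Fin N → ℝ) (bm : Conf d N) : ℝ := (9 * U m bm / 2) ^ ((1:ℝ)/3)

/-- The parabolic reference path `r₀(t) = β b_m t^{2/3}`. -/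
def parR0 (m : Fin N → ℝ) (bm : Conf d N) (t : ℝ) : Conf d N :=
  (beta m bm * t ^ ((2:ℝ)/3)) • bm

/-- The second derivative `r̈₀(t) = −(2/9) β b_m t^{−4/3}` of the parabolic reference path. -/
def parR0'' (m : Fin N → ℝ) (bm : Conf d N) (t : ℝ) : Conf d N :=
  (beta m bm * (-(2:ℝ)/9) * t ^ (-(4:ℝ)/3)) • bm

/-- The motion `γ(t) = φ(t) + r₀(t) + x − β b_m` associated with `φ` in the parabolic case. -/
def parCurve (m : Fin N → ℝ) (bm x : Conf d N) (φ : ℝ → Conf d N) (t : ℝ) : Conf d N :=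
  φ t + parR0 m bm t + x - beta m bm • bm

/-- The integrand of the parabolic renormalized Lagrangian action. -/
def parIntegrand (m : Fin N → ℝ) (bm x : Conf d N) (φ φ' : ℝ → Conf d N) (t : ℝ) : ℝ :=
  (mnorm m (φ' t)) ^ 2 / 2 + U m (parCurve m bm x φ t) - U m (parR0 m bm t)
    - minner m (parR0'' m bm t) (φ t)

/-- The parabolic renormalized Lagrangian action `A_{x,[1,T]}(φ)`, with values in
`ℝ ∪ {+∞}` : it equals the integral of the renormalized Lagrangian if this integrand is
integrable and the motion is a.e. collision-free, and `+∞` otherwise. -/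
def parAction (m : Fin N → ℝ) (bm x : Conf d N) (T : EReal) (φ φ' : ℝ → Conf d N) : EReal :=
  if IntegrableOn (parIntegrand m bm x φ φ') (timeSet 1 T) ∧
      (∀ᵐ t ∂volume.restrict (timeSet 1 T), ¬ collision (parCurve m bm x φ t))
  then ((∫ t in timeSet 1 T, parIntegrand m bm x φ φ' t : ℝ) : EReal)
  else (⊤ : EReal)

/-- The infimum of the parabolic renormalized action over `D₀^{1,2}(1,T)`. -/
def parInf (m : Fin N → ℝ) (bm x : Conf d N) (T : EReal) : EReal :=
  ⨅ (φ : ℝ → Conf d N) (φ' : ℝ → Conf d N) (_ : InD m 1 T φ φ'), parAction m bm x T φ φ'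

/-- The renormalized value function `v(x)` in the parabolic case. -/
def parValue (m : Fin N → ℝ) (bm x : Conf d N) : ℝ := (parInf m bm x ⊤).toReal

lemma absolutelyContinuousOnInterval_inv {S : ℝ} (hS : 1 ≤ S) :
    AbsolutelyContinuousOnInterval (fun t : ℝ => t⁻¹) 1 S := by
  have hL : LipschitzOnWith 1 (fun t : ℝ => t⁻¹) (uIcc 1 S) := by
    refine LipschitzOnWith.of_dist_le_mul fun x hx y hy => ?_
    rw [uIcc_of_le hS] at hx hy
    have hx0 : 0 < x := by linarith [hx.1]
    have hy0 : 0 < y := by linarith [hy.1]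
    have hxy : 1 ≤ x * y := by nlinarith [hx.1, hy.1]
    have h : x⁻¹ - y⁻¹ = (y - x) / (x * y) := by field_simp
    rw [Real.dist_eq, Real.dist_eq, h, abs_div, abs_of_pos (by positivity : 0 < x * y),
      abs_sub_comm y x, NNReal.coe_one, one_mul]
    exact div_le_self (abs_nonneg _) hxy
  exact hL.absolutelyContinuousOnInterval

/-- One-dimensional Hardy inequality on `[1, S]`. -/
lemma hardy_interval {f : ℝ → ℝ} {S : ℝ} (hS : 1 ≤ S) (hf : IntervalIntegrable f volume 1 S)
    (hf2 : IntervalIntegrable (fun t => f t ^ 2) volume 1 S) :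
    IntervalIntegrable (fun t => (∫ s in (1:ℝ)..t, f s) ^ 2 / t ^ 2) volume 1 S ∧
      ∫ t in (1:ℝ)..S, (∫ s in (1:ℝ)..t, f s) ^ 2 / t ^ 2 ≤ 4 * ∫ t in (1:ℝ)..S, f t ^ 2 := by
  set F : ℝ → ℝ := fun t => ∫ s in (1:ℝ)..t, f s with hF
  have hFac : AbsolutelyContinuousOnInterval F 1 S :=
    hf.absolutelyContinuousOnInterval_intervalIntegral (by simp)
  have hG : AbsolutelyContinuousOnInterval (fun t => F t * (F t * t⁻¹)) 1 S :=
    hFac.fun_mul (hFac.fun_mul (absolutelyContinuousOnInterval_inv hS))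
  have hint : IntervalIntegrable (fun t => F t ^ 2 / t ^ 2) volume 1 S := by
    apply ContinuousOn.intervalIntegrable
    refine (hFac.continuousOn.pow 2).div (by fun_prop) fun t ht => ?_
    rw [uIcc_of_le hS] at ht
    have : 0 < t := by linarith [ht.1]
    positivity
  refine ⟨hint, ?_⟩
  have hd := hG.integral_deriv_eq_sub
  have hF1 : F 1 = 0 := by simp [hF]
  have hnn : 0 ≤ ∫ t in (1:ℝ)..S, deriv (fun t => F t * (F t * t⁻¹)) t := by
    rw [hd, hF1]
    have : 0 < S := by linarith
    have : F S * (F S * S⁻¹) = F S ^ 2 / S := by field_simp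
    rw [this]; simp only [zero_mul, sub_zero]; positivity
  have hle : ∫ t in (1:ℝ)..S,
        ((1 / 4) * (F t ^ 2 / t ^ 2) + (1 / 2) * deriv (fun t => F t * (F t * t⁻¹)) t) ≤
      ∫ t in (1:ℝ)..S, f t ^ 2 := by
    refine intervalIntegral.integral_mono_ae_restrict hS
      ((hint.const_mul _).add (hG.intervalIntegrable_deriv.const_mul _)) hf2 ?_
    rw [Filter.EventuallyLE, ae_restrict_iff' measurableSet_Icc]
    filter_upwards [hf.ae_hasDerivAt_integral] with t ht htI
    have h1 : HasDerivAt F (f t) t := ht (by rwa [uIcc_of_le hS]) 1 (by simp)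
    have ht0 : 0 < t := by linarith [htI.1]
    have h2 := h1.mul (h1.mul (hasDerivAt_inv ht0.ne'))
    have h3 : deriv (fun t => F t * (F t * t⁻¹)) t =
        f t * (F t * t⁻¹) + F t * (f t * t⁻¹ + F t * -(t ^ 2)⁻¹) := h2.deriv
    rw [h3]
    have h4 : 0 ≤ (f t - F t / (2 * t)) ^ 2 := sq_nonneg _
    have h5 : f t ^ 2 - ((1 / 4) * (F t ^ 2 / t ^ 2) +
        (1 / 2) * (f t * (F t * t⁻¹) + F t * (f t * t⁻¹ + F t * -(t ^ 2)⁻¹))) =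
        (f t - F t / (2 * t)) ^ 2 := by
      field_simp
      ring
    linarith
  rw [intervalIntegral.integral_add (hint.const_mul _)
    (hG.intervalIntegrable_deriv.const_mul _), intervalIntegral.integral_const_mul,
    intervalIntegral.integral_const_mul] at hle
  linarith

lemma minner_self_eq (m : Fin N → ℝ) (x : Conf d N) :
    minner m x x = ∑ i, ∑ k, m i * x i k ^ 2 := by
  simp [minner, EuclideanSpace.real_norm_sq_eq, Finset.mul_sum]

lemma minner_comm (m : Fin N → ℝ) (x y : Conf d N) : minner m x y = minner m y x := by
  simp [minner, real_inner_comm]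

lemma minner_add_left (m : Fin N → ℝ) (x y z : Conf d N) :
    minner m (x + y) z = minner m x z + minner m y z := by
  simp [minner, inner_add_left, mul_add, Finset.sum_add_distrib]

lemma minner_smul_left (m : Fin N → ℝ) (c : ℝ) (x z : Conf d N) :
    minner m (c • x) z = c * minner m x z := by
  simp only [minner, Pi.smul_apply, real_inner_smul_left, Finset.mul_sum]
  exact Finset.sum_congr rfl fun i _ => by ring

lemma minner_add_smul_self (m : Fin N → ℝ) (c : ℝ) (x y : Conf d N) :
    minner m (x + c • y) (x + c • y) =
      minner m x x + 2 * c * minner m x y + c ^ 2 * minner m y y := by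
  rw [minner_add_left, minner_smul_left, minner_comm m x, minner_comm m y, minner_add_left,
    minner_add_left, minner_smul_left, minner_smul_left, minner_comm m y x]
  ring

lemma minner_self_nonneg {m : Fin N → ℝ} (hm : ∀ i, 0 < m i) (x : Conf d N) :
    0 ≤ minner m x x := by
  rw [minner_self_eq]
  exact Finset.sum_nonneg fun i _ => Finset.sum_nonneg fun k _ =>
    mul_nonneg (hm i).le (sq_nonneg _)

lemma mnorm_sq {m : Fin N → ℝ} (hm : ∀ i, 0 < m i) (x : Conf d N) :
    mnorm m x ^ 2 = minner m x x :=
  Real.sq_sqrt (minner_self_nonneg hm x)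

lemma mul_coord_sq_le {m : Fin N → ℝ} (hm : ∀ i, 0 < m i) (x : Conf d N) (i : Fin N)
    (k : Fin d) : m i * x i k ^ 2 ≤ minner m x x := by
  rw [minner_self_eq]
  have h : ∀ i, ∀ k, 0 ≤ m i * x i k ^ 2 := fun i k => mul_nonneg (hm i).le (sq_nonneg _)
  exact (Finset.single_le_sum (f := fun k => m i * x i k ^ 2) (fun k _ => h i k)
    (Finset.mem_univ k)).trans (Finset.single_le_sum (f := fun i => ∑ k, m i * x i k ^ 2)
    (fun i _ => Finset.sum_nonneg fun k _ => h i k) (Finset.mem_univ i))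

lemma mnorm_pos {m : Fin N → ℝ} (hm : ∀ i, 0 < m i) (hN : 2 ≤ N) {x : Conf d N}
    (hx : ¬ collision x) : 0 < mnorm m x := by
  refine Real.sqrt_pos.2 ((minner_self_nonneg hm x).lt_of_ne fun h0 => hx ?_)
  have hz : ∀ i, x i = 0 := fun i => by
    ext k
    have h1 := mul_coord_sq_le hm x i k
    have h2 : x i k ^ 2 ≤ 0 := by
      by_contra! h
      have := mul_pos (hm i) h
      linarith
    simpa using le_antisymm h2 (sq_nonneg _)
  exact ⟨⟨0, by omega⟩, ⟨1, by omega⟩, by simp, by rw [hz, hz]⟩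

lemma U_smul (m : Fin N → ℝ) {c : ℝ} (hc : 0 < c) (x : Conf d N) :
    U m (c • x) = U m x / c := by
  simp only [U, Finset.sum_div]
  refine Finset.sum_congr rfl fun i _ => Finset.sum_congr rfl fun j _ => ?_
  split_ifs
  · rw [Pi.smul_apply, Pi.smul_apply, ← smul_sub, norm_smul, Real.norm_of_nonneg hc.le,
      mul_comm c, div_div]
  · simp

lemma U_pos {m : Fin N → ℝ} (hm : ∀ i, 0 < m i) (hN : 2 ≤ N) {x : Conf d N}
    (hx : ¬ collision x) : 0 < U m x := by
  have hnn : ∀ i j : Fin N, 0 ≤ if i < j then m i * m j / ‖x i - x j‖ else 0 := fun i j => by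
    split_ifs
    · exact div_nonneg (mul_nonneg (hm i).le (hm j).le) (norm_nonneg _)
    · rfl
  have hlt : (⟨0, by omega⟩ : Fin N) < ⟨1, by omega⟩ := by simp
  refine Finset.sum_pos' (fun i _ => Finset.sum_nonneg fun j _ => hnn i j)
    ⟨⟨0, by omega⟩, Finset.mem_univ _, Finset.sum_pos' (fun j _ => hnn _ j)
      ⟨⟨1, by omega⟩, Finset.mem_univ _, ?_⟩⟩
  rw [if_pos hlt]
  refine div_pos (mul_pos (hm _) (hm _)) (norm_pos_iff.2 (sub_ne_zero.2 fun h => hx ?_))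
  exact ⟨_, _, hlt.ne, h⟩

lemma IsMinCentral.div_mnorm_le_U {m : Fin N → ℝ} (hm : ∀ i, 0 < m i) (hN : 2 ≤ N)
    {bm : Conf d N} (hbm : IsMinCentral m bm) {y : Conf d N} (hyX : inX m y)
    (hy : ¬ collision y) : U m bm / mnorm m y ≤ U m y := by
  have hρ := mnorm_pos hm hN hy
  have hρi : 0 < (mnorm m y)⁻¹ := inv_pos.2 hρ
  have h := hbm.2.2.2 ((mnorm m y)⁻¹ • y) ?_ ?_ ?_
  · rw [U_smul m hρi, div_inv_eq_mul] at h
    rwa [div_le_iff₀ hρ]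
  · have : ∑ i, m i • ((mnorm m y)⁻¹ • y) i = (mnorm m y)⁻¹ • ∑ i, m i • y i := by
      rw [Finset.smul_sum]
      exact Finset.sum_congr rfl fun i _ => by rw [Pi.smul_apply, smul_comm]
    rw [inX, this, hyX, smul_zero]
  · rintro ⟨i, j, hij, he⟩
    exact hy ⟨i, j, hij, smul_right_injective _ hρi.ne' he⟩
  · rw [minner_smul_left, minner_comm, minner_smul_left, ← mnorm_sq hm]
    field_simp

/-- Hardy inequality in the mass norm for curves in `D₀^{1,2}(1, T)`. -/
lemma InD.hardy {m : Fin N → ℝ} (hm : ∀ i, 0 < m i) {T : EReal} {φ φ' : ℝ → Conf d N}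
    (h : InD m 1 T φ φ') {S : ℝ} (hS : 1 ≤ S) (hST : (S : EReal) < T) :
    IntegrableOn (fun t => minner m (φ t) (φ t) / t ^ 2) (Ioc 1 S) ∧
      ∫ t in Ioc 1 S, minner m (φ t) (φ t) / t ^ 2 ≤
        4 * ∫ t in Ioc 1 S, minner m (φ' t) (φ' t) := by
  obtain ⟨-, -, hφ, hφ', hL2⟩ := h
  have hsub : Ioc 1 S ⊆ timeSet 1 T := fun t ht =>
    ⟨ht.1, (EReal.coe_le_coe_iff.2 ht.2).trans_lt hST⟩
  simp only [mnorm_sq hm] at hL2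
  replace hL2 := hL2.mono_set hsub
  have hcoord : ∀ i k, IntegrableOn (fun t => φ' t i k) (Ioc 1 S) := fun i k =>
    (((EuclideanSpace.proj k : EuclideanSpace ℝ (Fin d) →L[ℝ] ℝ).comp
      (ContinuousLinearMap.proj i : Conf d N →L[ℝ] EuclideanSpace ℝ (Fin d))).integrable_comp
      (hφ' S hS hST))
  have hcoord2 : ∀ i k, IntegrableOn (fun t => φ' t i k ^ 2) (Ioc 1 S) := fun i k => by
    refine Integrable.mono' (hL2.div_const (m i))
      ((hcoord i k).aestronglyMeasurable.pow 2) (ae_of_all _ fun t => ?_)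
    rw [Real.norm_of_nonneg (sq_nonneg _), le_div_iff₀ (hm i), mul_comm]
    exact mul_coord_sq_le hm _ i k
  have heq : ∀ i k, ∀ t ∈ Ioc 1 S, φ t i k = ∫ s in (1:ℝ)..t, φ' s i k := fun i k t ht => by
    have htT := (hsub ht).2
    rw [intervalIntegral.integral_of_le ht.1.le, hφ t ht.1.le htT]
    exact ((((EuclideanSpace.proj k : EuclideanSpace ℝ (Fin d) →L[ℝ] ℝ).comp
      (ContinuousLinearMap.proj i : Conf d N →L[ℝ] EuclideanSpace ℝ (Fin d)))).integral_comp_comm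
      (hφ' t ht.1.le htT)).symm
  have hH : ∀ i k, IntegrableOn (fun t => φ t i k ^ 2 / t ^ 2) (Ioc 1 S) ∧
      ∫ t in Ioc 1 S, φ t i k ^ 2 / t ^ 2 ≤ 4 * ∫ t in Ioc 1 S, φ' t i k ^ 2 := fun i k => by
    have hh := hardy_interval hS
      ((intervalIntegrable_iff_integrableOn_Ioc_of_le hS).2 (hcoord i k))
      ((intervalIntegrable_iff_integrableOn_Ioc_of_le hS).2 (hcoord2 i k))
    rw [intervalIntegrable_iff_integrableOn_Ioc_of_le hS, intervalIntegral.integral_of_le hS,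
      intervalIntegral.integral_of_le hS] at hh
    have hc : EqOn (fun t => φ t i k ^ 2 / t ^ 2)
        (fun t => (∫ s in (1:ℝ)..t, φ' s i k) ^ 2 / t ^ 2) (Ioc 1 S) := fun t ht => by
      simp only [heq i k t ht]
    refine ⟨hh.1.congr_fun hc.symm measurableSet_Ioc, ?_⟩
    rw [setIntegral_congr_fun measurableSet_Ioc hc]
    exact hh.2
  have hexp : (fun t => minner m (φ t) (φ t) / t ^ 2) =
      fun t => ∑ i, ∑ k, m i * (φ t i k ^ 2 / t ^ 2) := by
    ext t
    simp only [minner_self_eq, Finset.sum_div, mul_div_assoc]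
  rw [hexp]
  refine ⟨integrable_finsetSum _ fun i _ => integrable_finsetSum _ fun k _ =>
    (hH i k).1.const_mul _, ?_⟩
  simp only [minner_self_eq]
  rw [integral_finsetSum _ fun i _ => integrable_finsetSum _ fun k _ => (hH i k).1.const_mul _,
    integral_finsetSum _ fun i _ => integrable_finsetSum _ fun k _ => (hcoord2 i k).const_mul _,
    Finset.mul_sum]
  refine Finset.sum_le_sum fun i _ => ?_
  rw [integral_finsetSum _ fun k _ => (hH i k).1.const_mul _,
    integral_finsetSum _ fun k _ => (hcoord2 i k).const_mul _, Finset.mul_sum]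
  refine Finset.sum_le_sum fun k _ => ?_
  rw [integral_const_mul, integral_const_mul]
  nlinarith [(hH i k).2, hm i]

/-- The convexity-type estimate for the Kepler potential along a parabolic motion of radius
`β s`, perturbed by a vector with radial component `p` and squared length `q`. -/
lemma kepler_lower_bound {β s ρ p q : ℝ} (hβ : 0 < β) (hs : 0 < s) (hρ : 0 < ρ)
    (h : ρ ^ 2 = (β * s) ^ 2 + 2 * (β * s) * p + q) :
    -(1 / 9) * (q / s ^ 3) ≤
      (2 * β ^ 3 / 9) / ρ - (2 * β ^ 3 / 9) / (β * s) + 2 / 9 * β / s ^ 2 * p := by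
  have hq : q = ρ ^ 2 - (β * s) ^ 2 - 2 * (β * s) * p := by linarith
  have key : (2 * β ^ 3 / 9) / ρ - (2 * β ^ 3 / 9) / (β * s) + 2 / 9 * β / s ^ 2 * p
      - -(1 / 9) * (q / s ^ 3) = (ρ - β * s) ^ 2 * (ρ + 2 * (β * s)) / (9 * ρ * s ^ 3) := by
    rw [hq]
    field_simp
    ring
  have : 0 ≤ (ρ - β * s) ^ 2 * (ρ + 2 * (β * s)) / (9 * ρ * s ^ 3) := by positivity
  linarith

lemma parIntegrand_lower_bound {m : Fin N → ℝ} (hm : ∀ i, 0 < m i) (hN : 2 ≤ N)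
    {bm : Conf d N} (hbm : IsMinCentral m bm) {x : Conf d N} {φ φ' : ℝ → Conf d N} {t Q : ℝ}
    (hx : inX m x) (hφ : inX m (φ t)) (ht : 1 < t)
    (hQ : minner m (x + (-beta m bm) • bm) (x + (-beta m bm) • bm) ≤ Q)
    (hcol : ¬ collision (parCurve m bm x φ t)) :
    1 / 2 * minner m (φ' t) (φ' t) - 17 / 144 * (minner m (φ t) (φ t) / t ^ 2)
        - (17 / 9 * Q + beta m bm * (1 + Q) / 9) * t ^ (-(4:ℝ) / 3)
      ≤ parIntegrand m bm x φ φ' t := by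
  have ht0 : 0 < t := by linarith
  have hU := U_pos hm hN hbm.2.1
  set β := beta m bm with hβdef
  have hβ : 0 < β := Real.rpow_pos_of_pos (by positivity) _
  have hβ3 : U m bm = 2 * β ^ 3 / 9 := by
    have : β ^ 3 = 9 * U m bm / 2 := by
      rw [hβdef, beta, ← Real.rpow_natCast, ← Real.rpow_mul (by positivity)]
      norm_num
    linarith
  set s := t ^ ((2:ℝ) / 3) with hs
  have hs1 : 1 ≤ s := Real.one_le_rpow ht.le (by norm_num)
  have hs0 : 0 < s := by linarith
  have hs3 : t ^ 2 = s ^ 3 := by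
    rw [hs, ← Real.rpow_natCast, ← Real.rpow_natCast, ← Real.rpow_mul ht0.le]
    norm_num
  have hs2 : t ^ (-(4:ℝ) / 3) = 1 / s ^ 2 := by
    rw [hs, ← Real.rpow_natCast, ← Real.rpow_mul ht0.le, one_div, ← Real.rpow_neg ht0.le]
    norm_num
  set z := x + (-β) • bm with hz
  have hy : parCurve m bm x φ t = (φ t + (1:ℝ) • z) + (β * s) • bm := by
    rw [parCurve, parR0, hz, ← hβdef, ← hs, one_smul, neg_smul]
    abel
  have hyX : inX m (parCurve m bm x φ t) := by
    have e : ∀ i, m i • (parCurve m bm x φ t) i =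
        m i • φ t i + m i • x i + (β * s - β) • (m i • bm i) := fun i => by
      rw [hy, hz]
      simp only [Pi.add_apply, Pi.smul_apply]
      module
    rw [inX, Finset.sum_congr rfl fun i _ => e i, Finset.sum_add_distrib,
      Finset.sum_add_distrib, ← Finset.smul_sum, hφ, hx, hbm.1]
    simp
  have hρ := mnorm_pos hm hN hcol
  have hUy := hbm.div_mnorm_le_U hm hN hyX hcol
  have hUr : U m (parR0 m bm t) = U m bm / (β * s) := U_smul m (by positivity) bm
  have hnorm : mnorm m (parCurve m bm x φ t) ^ 2 = (β * s) ^ 2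
      + 2 * (β * s) * minner m (φ t + (1:ℝ) • z) bm
      + minner m (φ t + (1:ℝ) • z) (φ t + (1:ℝ) • z) := by
    rw [mnorm_sq hm, hy, minner_add_smul_self, hbm.2.2.1]
    ring
  have hK := kepler_lower_bound hβ hs0 hρ hnorm
  rw [← hβ3] at hK
  have hp : minner m (φ t + (1:ℝ) • z) bm = minner m (φ t) bm + minner m z bm := by
    rw [one_smul, minner_add_left]
  have hq : minner m (φ t + (1:ℝ) • z) (φ t + (1:ℝ) • z) ≤
      17 / 16 * minner m (φ t) (φ t) + 17 * Q := by
    have h1 := minner_add_smul_self m 1 (φ t) z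
    have h2 := minner_add_smul_self m (-16) (φ t) z
    have h3 := minner_self_nonneg hm (φ t + (-16 : ℝ) • z)
    linarith
  have hzb : minner m z bm ≤ (1 + Q) / 2 := by
    have h2 := minner_add_smul_self m (-1) z bm
    have h3 := minner_self_nonneg hm (z + (-1 : ℝ) • bm)
    have h4 := hbm.2.2.1
    linarith
  have hr : minner m (parR0'' m bm t) (φ t) = -(2 / 9 * β / s ^ 2 * minner m (φ t) bm) := by
    rw [parR0'', minner_smul_left, hs2, minner_comm m bm, ← hβdef]
    ring
  have hQ0 : 0 ≤ Q := (minner_self_nonneg hm z).trans hQ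
  have e1 : minner m (φ t + (1:ℝ) • z) (φ t + (1:ℝ) • z) / s ^ 3 ≤
      17 / 16 * (minner m (φ t) (φ t) / s ^ 3) + 17 * (Q * (1 / s ^ 2)) := by
    have a1 := div_le_div_of_nonneg_right hq (by positivity : 0 ≤ s ^ 3)
    have a2 : Q / s ^ 3 ≤ Q * (1 / s ^ 2) := by
      rw [mul_one_div]
      exact div_le_div_of_nonneg_left hQ0 (by positivity) (pow_le_pow_right₀ hs1 (by norm_num))
    rw [add_div, mul_div_assoc, mul_div_assoc] at a1
    linarith
  have e2 : 2 / 9 * β / s ^ 2 * minner m z bm ≤ β * (1 + Q) / 9 * (1 / s ^ 2) := by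
    have := mul_le_mul_of_nonneg_left hzb (by positivity : 0 ≤ 2 / 9 * β / s ^ 2)
    calc _ ≤ _ := this
      _ = _ := by ring
  rw [hp, mul_add] at hK
  rw [parIntegrand, hUr, hr, mnorm_sq hm, hs2, hs3]
  linarith

lemma integral_Ioc_rpow_le {S : ℝ} (hS : 1 ≤ S) :
    IntegrableOn (fun t : ℝ => t ^ (-(4:ℝ) / 3)) (Ioc 1 S) ∧
      ∫ t in Ioc 1 S, t ^ (-(4:ℝ) / 3) ≤ 3 := by
  have h0 : (0:ℝ) ∉ uIcc 1 S := by
    rw [uIcc_of_le hS]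
    exact fun h => by linarith [h.1]
  refine ⟨(intervalIntegrable_iff_integrableOn_Ioc_of_le hS).1
    (intervalIntegral.intervalIntegrable_rpow (Or.inr h0)), ?_⟩
  rw [← intervalIntegral.integral_of_le hS, integral_rpow (Or.inr ⟨by norm_num, h0⟩)]
  have : 0 ≤ S ^ (-(4:ℝ) / 3 + 1) := Real.rpow_nonneg (by linarith) _
  rw [Real.one_rpow, div_le_iff_of_neg (by norm_num)]
  norm_num at this ⊢
  linarith

/-- A bound between integrals over all `(t₀, S]` with `S < T` passes to `(t₀, T)`. -/
lemma setIntegral_timeSet_le {t0 C : ℝ} {T : EReal} (hT : (t0 : EReal) < T) {f g : ℝ → ℝ}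
    (hf : IntegrableOn f (timeSet t0 T)) (hg : IntegrableOn g (timeSet t0 T))
    (h : ∀ S : ℝ, t0 ≤ S → (S : EReal) < T →
      ∫ t in Ioc t0 S, g t ≤ (∫ t in Ioc t0 S, f t) + C) :
    ∫ t in timeSet t0 T, g t ≤ (∫ t in timeSet t0 T, f t) + C := by
  obtain ⟨u, hu, huI, hulim⟩ := exists_seq_strictMono_tendsto' hT
  have hco : ∀ n, ((u n).toReal : EReal) = u n := fun n =>
    EReal.coe_toReal (huI n).2.ne_top (huI n).1.ne_bot
  have hmono : Monotone fun n => Ioc t0 (u n).toReal := fun a b hab =>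
    Ioc_subset_Ioc_right (EReal.coe_le_coe_iff.1 (by rw [hco, hco]; exact hu.monotone hab))
  have hunion : ⋃ n, Ioc t0 (u n).toReal = timeSet t0 T := by
    ext t
    simp only [mem_iUnion, mem_Ioc, timeSet, mem_ofPred_eq]
    constructor
    · rintro ⟨n, h1, h2⟩
      refine ⟨h1, lt_of_le_of_lt ?_ (huI n).2⟩
      rw [← hco n]
      exact EReal.coe_le_coe_iff.2 h2
    · rintro ⟨h1, h2⟩
      obtain ⟨n, hn⟩ := (hulim.eventually (lt_mem_nhds h2)).exists
      exact ⟨n, h1, EReal.coe_le_coe_iff.1 (by rw [hco]; exact hn.le)⟩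
  have lf := tendsto_setIntegral_of_monotone (μ := volume) (f := f)
    (fun n => measurableSet_Ioc) hmono (by rwa [hunion])
  have lg := tendsto_setIntegral_of_monotone (μ := volume) (f := g)
    (fun n => measurableSet_Ioc) hmono (by rwa [hunion])
  rw [hunion] at lf lg
  refine le_of_tendsto_of_tendsto' lg (lf.add_const C) fun n => h _ ?_ ?_
  · exact EReal.coe_le_coe_iff.1 (by rw [hco]; exact (huI n).1.le)
  · rw [hco]; exact (huI n).2

/-- **Uniform coercivity of the renormalized action, parabolic case** : for every compact
set `K ⊆ X` there are constants `A > 0` and `B, C ≥ 0`, independent of `x` and `T`, such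
that for all `x ∈ K`, all `T ∈ (1, +∞]` and all `φ ∈ D₀^{1,2}(1,T)`,
`A_{x,[1,T]}(φ) ≥ A ‖φ‖_{D_T}² − B ‖φ‖_{D_T} − C`. -/
theorem coercivity_parabolic {d N : ℕ} (hd : 2 ≤ d) (hN : 2 ≤ N)
    (m : Fin N → ℝ) (hm : ∀ i, 0 < m i)
    (bm : Conf d N) (hbm : IsMinCentral m bm)
    (K : Set (Conf d N)) (hKcpt : IsCompact K) (hKX : ∀ x ∈ K, inX m x) :
    ∃ A > (0:ℝ), ∃ B ≥ (0:ℝ), ∃ C ≥ (0:ℝ), ∀ x ∈ K, ∀ T : EReal, 1 < T →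
      ∀ φ φ' : ℝ → Conf d N, InD m 1 T φ φ' →
        ((A * (Dnorm m 1 T φ') ^ 2 - B * Dnorm m 1 T φ' - C : ℝ) : EReal) ≤
          parAction m bm x T φ φ' := by
  obtain ⟨Q₀, hQ₀⟩ := hKcpt.bddAbove_image
    (f := fun x : Conf d N => minner m (x + (-beta m bm) • bm) (x + (-beta m bm) • bm))
    (by unfold minner; fun_prop)
  have hQ : ∀ x ∈ K, minner m (x + (-beta m bm) • bm) (x + (-beta m bm) • bm) ≤ max Q₀ 0 :=
    fun x hx => (hQ₀ (mem_image_of_mem _ hx)).trans (le_max_left _ _)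
  set Q := max Q₀ 0
  have hQ0 : 0 ≤ Q := le_max_right _ _
  have hβ : 0 ≤ beta m bm :=
    Real.rpow_nonneg (by have := U_pos hm hN hbm.2.1; positivity) _
  set C := 17 / 9 * Q + beta m bm * (1 + Q) / 9
  have hC0 : 0 ≤ C := by positivity
  refine ⟨1 / 36, by norm_num, 0, le_rfl, C * 3, by positivity, fun x hx T hT φ φ' hφ => ?_⟩
  rw [parAction]
  split_ifs with hint
  swap
  · exact le_top
  obtain ⟨hI, hcol⟩ := hint
  have hsq : ∀ t, mnorm m (φ' t) ^ 2 = minner m (φ' t) (φ' t) := fun t => mnorm_sq hm _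
  have hL2 := hφ.2.2.2.2
  simp only [hsq] at hL2
  have hD : Dnorm m 1 T φ' ^ 2 = ∫ t in timeSet 1 T, minner m (φ' t) (φ' t) := by
    rw [Dnorm, Real.sq_sqrt (integral_nonneg fun t => sq_nonneg _)]
    simp only [hsq]
  rw [EReal.coe_le_coe_iff, hD, zero_mul, sub_zero, sub_le_iff_le_add, ← integral_const_mul]
  refine setIntegral_timeSet_le hT hI (hL2.const_mul _) fun S hS hST => ?_
  have hsub : Ioc 1 S ⊆ timeSet 1 T := fun t ht =>
    ⟨ht.1, (EReal.coe_le_coe_iff.2 ht.2).trans_lt hST⟩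
  obtain ⟨hHi, hH⟩ := hφ.hardy hm hS hST
  obtain ⟨hRi, hR⟩ := integral_Ioc_rpow_le hS
  have hLi : IntegrableOn (fun t => minner m (φ' t) (φ' t)) (Ioc 1 S) := hL2.mono_set hsub
  have hle := setIntegral_mono_ae_restrict
    (((hLi.const_mul (1 / 2)).sub (hHi.const_mul (17 / 144))).sub (hRi.const_mul C))
    (hI.mono_set hsub) (by
      filter_upwards [ae_restrict_of_ae_restrict_of_subset hsub hcol,
        ae_restrict_mem measurableSet_Ioc] with t htc ht
      exact parIntegrand_lower_bound hm hN hbm (hKX x hx)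
        (hφ.2.1 t ht.1.le (hsub ht).2) ht.1 (hQ x hx) htc)
  rw [integral_sub' ((hLi.const_mul (1 / 2)).sub (hHi.const_mul (17 / 144))) (hRi.const_mul C),
    integral_sub' (hLi.const_mul (1 / 2)) (hHi.const_mul (17 / 144)), integral_const_mul,
    integral_const_mul, integral_const_mul] at hle
  rw [integral_const_mul]
  have := mul_le_mul_of_nonneg_left hR hC0
  linarith

end NBodyHJ
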